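/- Let K ⊆ ℝⁿ be a convex polytope with integral vertices, let F̄ be a nonzero Laurent polynomial in n variables over 𝔽_q with Δ(F̄) ⊆ K, and let F ∈ ℤ_q[x^±] be any Laurent polynomial whose coefficientwise reduction modulo p equals F̄ and with Δ(F) ⊆ K. Let r, λ, τ be positive integers satisfying τ·(p−1)·a·r ≥ λ. Let 𝔽_{q^r} := GaloisField p (a·r), fix any ring homomorphism ι : 𝔽_q → 𝔽_{q^r}, and let N be the number of points c = (c₁,…,cₙ) with each cᵢ ∈ 𝔽_{q^r}ˣ such that the Laurent polynomial obtained from F̄ by applying ι to its coefficients vanishes at c. For each 0 ≤ s ≤ λ+τ−1, let B_s := (sK) ∩ ℤⁿ, let M_s be the B_s × B_s matrix over ℤ_q with entries (M_s)_{v,u} = [F^{(p−1)s}]_{pv−u}, let Φ_s := φ^{a−1}(M_s)·φ^{a−2}(M_s)⋯φ(M_s)·M_s (φ acting entrywise), and let α_s := (−1)^s · Σ_{t=0}^{τ−1} (−1)^t · C(λ+t−1, t) · C(λ, s−t) ∈ ℤ, where C(λ, s−t) is taken to be 0 unless 0 ≤ s−t ≤ λ. Then, in ℤ_q, the difference N −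 (q^r−1)^n · Σ_{s=0}^{λ+τ−1} α_s · trace(Φ_s^r) lies in the ideal generated by p^λ. -/

import Mathlib

open WittVector

noncomputable section

variable (p : ℕ) [Fact p.Prime] (a n : ℕ)

/-- The finite field `𝔽_q` with `q = p^a` elements. -/
abbrev Fq := GaloisField p a

/-- The ring `ℤ_q` of `p`-typical Witt vectors of `𝔽_q`. -/
abbrev Zq := WittVector p (Fq p a)

/-- The Witt-vector Frobenius automorphism `φ` of `ℤ_q`. -/
def φW : Zq p a ≃+* Zq p a := WittVector.frobeniusEquiv p (Fq p a)

/-- The ring `ℤ_q[x^±]` of Laurent polynomials in `n` variables over `ℤ_q`. -/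
abbrev LP := AddMonoidAlgebra (Zq p a) (Fin n → ℤ)

/-- The map `φ` on Laurent polynomials: `φ(G) = Σ_u φ([G]_u) x^{pu}`. -/
def φL (G : LP p a n) : LP p a n :=
  Finsupp.sum G.coeff fun u c => AddMonoidAlgebra.single ((p : ℤ) • u) (φW p a c)

/-- The map `ψ` on Laurent polynomials: `ψ(G) = Σ_u φ⁻¹([G]_{pu}) x^u`. -/
def ψL (G : LP p a n) : LP p a n :=
  AddMonoidAlgebra.ofCoeff <| Finsupp.mapRange (φW p a).symm (map_zero _)
    (Finsupp.comapDomain (fun u : Fin n → ℤ => (p : ℤ) • u) G.coeff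
      ((smul_right_injective (Fin n → ℤ)
        (by exact_mod_cast (Fact.out : p.Prime).ne_zero)).injOn))

/-- The operator `A_H = ψ ∘ T_{H^{p-1}}`, where `T_H` is multiplication by `H`. -/
def A (H : LP p a n) (G : LP p a n) : LP p a n := ψL p a n (H ^ (p - 1) * G)


open scoped Pointwise

/-- The coordinatewise embedding of `ℤⁿ` into `ℝⁿ`. -/
def emb (n : ℕ) : (Fin n → ℤ) → (Fin n → ℝ) := fun u i => (u i : ℝ)

/-- The Newton polytope of a Laurent polynomial: the convex hull in `ℝⁿ` of its
set of exponents with nonzero coefficient. -/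
def newton {R : Type*} [CommSemiring R] {n : ℕ} (F : AddMonoidAlgebra R (Fin n → ℤ)) :
    Set (Fin n → ℝ) :=
  convexHull ℝ (emb n '' {u | F.coeff u ≠ 0})


/-- The matrix `M_s` with rows and columns indexed by `B = (sK) ∩ ℤⁿ`, given by
`(M_s)_{v,u} = [F^{(p−1)s}]_{pv−u}`. -/
def Ms (F : LP p a n) (s : ℕ) (B : Finset (Fin n → ℤ)) : Matrix B B (Zq p a) :=
  fun v u => (F ^ ((p - 1) * s)).coeff ((p : ℤ) • (v : Fin n → ℤ) - (u : Fin n → ℤ))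

/-- The matrix product `Φ_s = φ^{a−1}(M_s) ⋯ φ(M_s) · M_s`, where `φ` acts entrywise. -/
def Φmat (B : Finset (Fin n → ℤ)) (M : Matrix B B (Zq p a)) : Matrix B B (Zq p a) :=
  (((List.range a).reverse).map fun i => M.map fun x => (⇑(φW p a))^[i] x).prod

/-- Evaluation of the Laurent polynomial obtained from `F̄` by applying `ι` to its
coefficients at a point `c` of the torus. -/
def evalTorus (r : ℕ) (ι : Fq p a →+* GaloisField p (a * r))
    (Fbar : AddMonoidAlgebra (Fq p a) (Fin n → ℤ)) (c : Fin n → GaloisField p (a * r)) :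
    GaloisField p (a * r) :=
  Finsupp.sum Fbar.coeff fun u co => ι co * ∏ i, c i ^ u i

/-- The number `N` of points `c ∈ (𝔽_{q^r}ˣ)ⁿ` at which `F̄` (mapped via `ι`) vanishes. -/
def Npoints (r : ℕ) (ι : Fq p a →+* GaloisField p (a * r))
    (Fbar : AddMonoidAlgebra (Fq p a) (Fin n → ℤ)) : ℕ :=
  Nat.card {c : Fin n → GaloisField p (a * r) //
    (∀ i, c i ≠ 0) ∧ evalTorus p a n r ι Fbar c = 0}

/-- `α_s = (−1)^s Σ_{t=0}^{τ−1} (−1)^t C(λ+t−1, t) C(λ, s−t)`, with `C(λ, s−t) = 0`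
unless `0 ≤ s−t ≤ λ`. -/
def α (lam tau s : ℕ) : ℤ :=
  (-1) ^ s * ∑ t ∈ Finset.range tau,
    (-1) ^ t * ((lam + t - 1).choose t : ℤ) * (if t ≤ s then (lam.choose (s - t) : ℤ) else 0)

/-!
Let `x` be the value of `F` at the Teichmüller lift of a point `c` of the torus over `𝔽_{q^r}`, and
let `Y` be the `(p - 1)`-th power of the product of the `a r` Frobenius conjugates of `x`. If
`F̄(c) = 0` then `p ∣ x`, so `Y` is divisible by `p ^ ((p - 1) a r)`; otherwise `Y ≡ 1 mod p` by
Fermat's little theorem. The polynomial `∑ s, α_s X^s` is the product of `(1 - X)^λ` and the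
truncation at order `τ` of `(1 - X)^(-λ)`, so it is divisible by `(1 - X)^λ` and congruent to `1`
modulo `X^τ`. Hence `∑ s, α_s Y^s` is, modulo `p^λ`, the indicator of `F̄(c) = 0`.

It remains to sum `Y^s` over the torus. `Y^s` is the value at the Teichmüller point of the product
of the Frobenius twists of `H = F^((p - 1) s)`. By orthogonality of characters, only the exponents
`(q^r - 1) u` survive in the sum, each with weight `(q^r - 1)^n`, and the corresponding coefficients
are the diagonal entries of `Φ_s^r`. The matrices may be restricted to exponents in `sK` because
`Δ(H) ⊆ (p - 1) s K`: if `[H]_{p w - u} ≠ 0` with `u ∈ sK`, then `p w ∈ (p - 1) s K + s K = p s K`.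
-/

section TruncatedBinomial

open Polynomial

/-- The polynomial `∑ s, α_s X^s` of degree `< λ + τ`: the product of `(1 - X)^λ` and the truncation
at order `τ` of its inverse power series. -/
def alphaPoly (lam tau : ℕ) : ℤ[X] :=
  (1 - X) ^ lam * PowerSeries.trunc tau (PowerSeries.invOneSubPow ℤ lam).val

lemma coeff_invOneSubPow (d t : ℕ) :
    PowerSeries.coeff t (PowerSeries.invOneSubPow ℤ d).val = (d + t - 1).choose t := by
  rcases d with _ | d
  · cases t <;> simp [PowerSeries.invOneSubPow_zero, PowerSeries.coeff_one]
  · rw [PowerSeries.invOneSubPow_val_succ_eq_mk_add_choose, PowerSeries.coeff_mk,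
      Nat.choose_symm_add, add_right_comm, Nat.add_sub_cancel]

lemma coeff_one_sub_X_pow (d s : ℕ) : ((1 - X : ℤ[X]) ^ d).coeff s = (-1) ^ s * d.choose s := by
  have h : (1 - X : ℤ[X]) ^ d = ((1 + X) ^ d).comp (C (-1) * X) := by
    simp [sub_eq_add_neg]
  rw [h, comp_C_mul_X_coeff, coeff_one_add_X_pow, mul_comm]

lemma coeff_alphaPoly (lam tau s : ℕ) : (alphaPoly lam tau).coeff s = α lam tau s := by
  rw [alphaPoly, PowerSeries.trunc_apply, ← Finset.range_eq_Ico, α, Finset.mul_sum, Finset.mul_sum,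
    finsetSum_coeff]
  refine Finset.sum_congr rfl fun t _ ↦ ?_
  rw [← C_mul_X_pow_eq_monomial, mul_left_comm, coeff_C_mul, coeff_mul_X_pow', coeff_one_sub_X_pow,
    coeff_invOneSubPow]
  split_ifs with h
  · have hsign : (-1 : ℤ) ^ (s - t) = (-1) ^ s * (-1) ^ t := by
      rw [← pow_add, show s + t = s - t + (t + t) by omega, pow_add _ (s - t),
        Even.neg_one_pow ⟨t, rfl⟩, mul_one]
    rw [hsign]
    ring
  · simp

lemma natDegree_alphaPoly_lt {lam : ℕ} (tau : ℕ) (hlam : 0 < lam) :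
    (alphaPoly lam tau).natDegree < lam + tau := by
  rcases tau with _ | tau
  · simpa [alphaPoly] using hlam
  · have hpow : ((1 - X : ℤ[X]) ^ lam).natDegree ≤ lam := by compute_degree
    exact natDegree_mul_le.trans_lt <|
      add_lt_add_of_le_of_lt hpow (PowerSeries.natDegree_trunc_lt _ tau)

lemma X_pow_dvd_alphaPoly_sub_one (lam tau : ℕ) : X ^ tau ∣ alphaPoly lam tau - 1 := by
  set f : PowerSeries ℤ := (PowerSeries.invOneSubPow ℤ lam).val
  have hinv : (1 - PowerSeries.X) ^ lam * f = 1 := by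
    rw [← PowerSeries.invOneSubPow_inv_eq_one_sub_pow, Units.inv_val]
  have hdvd : (PowerSeries.X ^ tau : PowerSeries ℤ) ∣ (alphaPoly lam tau - 1 : ℤ[X]) := by
    have htrunc := PowerSeries.eq_X_pow_mul_shift_add_trunc tau f
    refine ⟨-(1 - PowerSeries.X) ^ lam * PowerSeries.mk fun i ↦ PowerSeries.coeff (i + tau) f, ?_⟩
    push_cast [alphaPoly]
    linear_combination hinv - (1 - PowerSeries.X) ^ lam * htrunc
  rw [X_pow_dvd_iff]
  simpa only [PowerSeries.X_pow_dvd_iff, coeff_coe] using hdvd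

variable {R : Type*} [CommRing R] {lam : ℕ}

lemma aeval_alphaPoly (tau : ℕ) (hlam : 0 < lam) (y : R) :
    aeval y (alphaPoly lam tau) = ∑ s ∈ Finset.range (lam + tau), (α lam tau s : R) * y ^ s := by
  rw [aeval_eq_sum_range' (natDegree_alphaPoly_lt tau hlam)]
  simp [coeff_alphaPoly]

lemma pow_dvd_sum_α_mul_pow_sub_one (tau : ℕ) (hlam : 0 < lam) (y : R) :
    y ^ tau ∣ ∑ s ∈ Finset.range (lam + tau), (α lam tau s : R) * y ^ s - 1 := by
  simpa [← aeval_alphaPoly tau hlam] using map_dvd (aeval y) (X_pow_dvd_alphaPoly_sub_one lam tau)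

lemma one_sub_pow_dvd_sum_α_mul_pow (tau : ℕ) (hlam : 0 < lam) (y : R) :
    (1 - y) ^ lam ∣ ∑ s ∈ Finset.range (lam + tau), (α lam tau s : R) * y ^ s := by
  simp [← aeval_alphaPoly tau hlam, alphaPoly]

end TruncatedBinomial

section TwistedPow

/-- The twisted power `f^{m-1}(x) ⋯ f(x) x`. Its instances are the matrix `Φ_s`, the product of the
Frobenius twists of a Laurent polynomial, and the norm of a Witt vector. -/
def twistedPow {N : Type*} [Monoid N] (f : N → N) (x : N) : ℕ → N
  | 0 => 1
  | m + 1 => f (twistedPow f x m) * x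

lemma twistedPow_succ {N : Type*} [Monoid N] (f : N → N) (x : N) (m : ℕ) :
    twistedPow f x (m + 1) = f (twistedPow f x m) * x := rfl

lemma map_twistedPow {N N' F : Type*} [Monoid N] [Monoid N'] [FunLike F N N']
    [MonoidHomClass F N N'] (e : F) {f : N → N} {g : N' → N'} (hfg : ∀ x, e (f x) = g (e x))
    (x : N) (m : ℕ) : e (twistedPow f x m) = twistedPow g (e x) m := by
  induction m with
  | zero => exact map_one e
  | succ m ih => rw [twistedPow_succ, map_mul, hfg, ih, twistedPow_succ]

lemma twistedPow_eq_list_prod {N F : Type*} [Monoid N] [FunLike F N N] [MonoidHomClass F N N]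
    (f : F) (x : N) (m : ℕ) :
    twistedPow f x m = ((List.range m).reverse.map fun i ↦ f^[i] x).prod := by
  induction m with
  | zero => rfl
  | succ m ih =>
    rw [twistedPow_succ, ih, map_list_prod, List.map_map, List.range_succ_eq_map, List.reverse_cons,
      List.map_append, List.prod_append, ← List.map_reverse, List.map_map]
    simp only [Function.comp_def, Function.iterate_succ_apply', List.map_cons, List.map_nil,
      List.prod_singleton, Function.iterate_zero, id]

lemma twistedPow_add {N F : Type*} [Monoid N] [FunLike F N N] [MonoidHomClass F N N]
    (f : F) (x : N) (m l : ℕ) :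
    twistedPow f x (m + l) = f^[l] (twistedPow f x m) * twistedPow f x l := by
  induction l with
  | zero => simp [twistedPow]
  | succ l ih =>
    rw [← add_assoc, twistedPow_succ, ih, map_mul, mul_assoc, ← Function.iterate_succ_apply' f,
      ← twistedPow_succ]

lemma twistedPow_mul {N F : Type*} [Monoid N] [FunLike F N N] [MonoidHomClass F N N]
    (f : F) {a : ℕ} (hf : ∀ y, f^[a] y = y) (x : N) (r : ℕ) :
    twistedPow f x (a * r) = twistedPow f x a ^ r := by
  induction r with
  | zero => simp [twistedPow]
  | succ r ih => rw [mul_add_one, twistedPow_add, hf, ih, pow_succ]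

lemma twistedPow_pow {N F : Type*} [CommMonoid N] [FunLike F N N] [MonoidHomClass F N N]
    (f : F) (x : N) (k m : ℕ) : twistedPow f (x ^ k) m = twistedPow f x m ^ k := by
  induction m with
  | zero => simp [twistedPow]
  | succ m ih => rw [twistedPow_succ, ih, map_pow, ← mul_pow, ← twistedPow_succ]

lemma pow_dvd_twistedPow {N F : Type*} [CommMonoid N] [FunLike F N N] [MonoidHomClass F N N]
    (f : F) {c x : N} (hc : f c = c) (hcx : c ∣ x) (m : ℕ) : c ^ m ∣ twistedPow f x m := by
  induction m with
  | zero => simp [twistedPow]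
  | succ m ih =>
    have hdvd := map_dvd f ih
    rw [map_pow, hc] at hdvd
    exact pow_succ c m ▸ mul_dvd_mul hdvd hcx

lemma twistedPow_powMap {N : Type*} [CommMonoid N] (k : ℕ) (x : N) (m : ℕ) :
    twistedPow (· ^ k) x m = x ^ ∑ i ∈ Finset.range m, k ^ i := by
  induction m with
  | zero => simp [twistedPow]
  | succ m ih => rw [twistedPow_succ, ih, geom_sum_succ, mul_comm k, pow_succ, pow_mul]

end TwistedPow

section Twist

variable {R : Type*} [CommSemiring R] {M : Type*} [AddCommGroup M]

/-- The endomorphism `∑ c_u x^u ↦ ∑ φ(c_u) x^{k u}` of a group algebra. -/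
def twist (φ : R →+* R) (k : ℤ) : AddMonoidAlgebra R M →+* AddMonoidAlgebra R M :=
  (AddMonoidAlgebra.mapDomainRingHom R (zsmulAddGroupHom k : M →+ M)).comp
    (AddMonoidAlgebra.mapRingHom M φ)

@[simp]
lemma twist_single (φ : R →+* R) (k : ℤ) (u : M) (c : R) :
    twist φ k (AddMonoidAlgebra.single u c) = AddMonoidAlgebra.single (k • u) (φ c) := by
  simp [twist]

lemma twist_eq_sum (φ : R →+* R) (k : ℤ) (G : AddMonoidAlgebra R M) :
    twist φ k G = ∑ z ∈ G.coeff.support, AddMonoidAlgebra.single (k • z) (φ (G.coeff z)) := by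
  conv_lhs => rw [← AddMonoidAlgebra.sum_coeff_single G, Finsupp.sum, map_sum]
  simp only [twist_single]

lemma coeff_twist_mul (φ : R →+* R) (k : ℤ) (G H : AddMonoidAlgebra R M) (v : M) :
    (twist φ k G * H).coeff v = ∑ᶠ z, φ (G.coeff z) * H.coeff (v - k • z) := by
  rw [finsum_eq_sum_of_support_subset (s := G.coeff.support), twist_eq_sum, Finset.sum_mul,
    AddMonoidAlgebra.coeff_sum, Finsupp.finsetSum_apply]
  · refine Finset.sum_congr rfl fun z _ ↦
      AddMonoidAlgebra.coeff_single_mul_eq_mul_coeff _ fun m _ ↦ ?_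
    rw [eq_sub_iff_add_eq, add_comm]
  · intro z hz
    rw [Finset.mem_coe, Finsupp.mem_support_iff]
    intro h
    simp [h] at hz

/-- The matrix of Dwork's operator `G ↦ ψ(H G)` on the span of the monomials `x^u`, `u ∈ B`, up to
the semilinearity of `ψ`. -/
def transferMatrix (k : ℤ) (H : AddMonoidAlgebra R M) (B : Finset M) : Matrix B B R :=
  fun v u ↦ H.coeff (k • (v : M) - u)

variable [DecidableEq M] {k : ℤ} {H : AddMonoidAlgebra R M} {B : Finset M}

lemma twistedPow_transferMatrix_apply (hB : ∀ u ∈ B, ∀ w, H.coeff (k • w - u) ≠ 0 → w ∈ B)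
    (φ : R →+* R) (m : ℕ) (v u : B) :
    twistedPow φ.mapMatrix (transferMatrix k H B) m v u =
      (twistedPow (twist φ k) H m).coeff (k ^ m • (v : M) - u) := by
  induction m generalizing v u with
  | zero =>
    rw [pow_zero, one_smul, twistedPow, twistedPow, Matrix.one_apply, AddMonoidAlgebra.one_def,
      AddMonoidAlgebra.coeff_single, Finsupp.single_apply]
    simp only [eq_comm (a := (0 : M)), sub_eq_zero, Subtype.ext_iff]
  | succ m ih =>
    let term (w : M) : R :=
      φ ((twistedPow (twist φ k) H m).coeff (k ^ m • (v : M) - w)) * H.coeff (k • w - u)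
    have hsupp : Function.support term ⊆ B := fun w hw ↦ hB u u.2 w (right_ne_zero_of_mul hw)
    calc twistedPow φ.mapMatrix (transferMatrix k H B) (m + 1) v u
        = ∑ w : B, term w := by
          rw [twistedPow_succ, Matrix.mul_apply]
          exact Finset.sum_congr rfl fun w _ ↦ by rw [φ.mapMatrix_apply, Matrix.map_apply, ih]; rfl
      _ = ∑ᶠ w, term w := by
          rw [finsum_eq_sum_of_support_subset _ hsupp, Finset.sum_coe_sort B term]
      _ = ∑ᶠ z, term (k ^ m • (v : M) - z) := (finsum_comp_equiv (Equiv.subLeft _)).symm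
      _ = (twistedPow (twist φ k) H (m + 1)).coeff (k ^ (m + 1) • (v : M) - u) := by
          rw [twistedPow_succ, coeff_twist_mul]
          refine finsum_congr fun z ↦ ?_
          simp only [term]
          rw [sub_sub_cancel, smul_sub, smul_smul, ← pow_succ', sub_right_comm]

lemma trace_twistedPow_transferMatrix (hB : ∀ u ∈ B, ∀ w, H.coeff (k • w - u) ≠ 0 → w ∈ B)
    (φ : R →+* R) (m : ℕ) :
    (twistedPow φ.mapMatrix (transferMatrix k H B) m).trace =
      ∑ u ∈ B, (twistedPow (twist φ k) H m).coeff ((k ^ m - 1) • u) := by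
  rw [Matrix.trace, ← Finset.sum_coe_sort B]
  refine Finset.sum_congr rfl fun u _ ↦ ?_
  rw [Matrix.diag_apply, twistedPow_transferMatrix_apply hB, sub_smul, one_smul]

end Twist

section NewtonPolytope

variable {n : ℕ} {R : Type*} [CommSemiring R] {K : Set (Fin n → ℝ)}

lemma emb_add (u v : Fin n → ℤ) : emb n (u + v) = emb n u + emb n v := by
  ext i
  simp [emb]

lemma emb_zsmul (k : ℤ) (u : Fin n → ℤ) : emb n (k • u) = (k : ℝ) • emb n u := by
  ext i
  simp [emb]

lemma emb_zsmul_mem_smul_iff {k : ℤ} (hk : k ≠ 0) (u : Fin n → ℤ) (s : ℝ) :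
    emb n (k • u) ∈ (k * s : ℝ) • K ↔ emb n u ∈ s • K := by
  rw [emb_zsmul, mul_smul, Set.smul_mem_smul_set_iff₀ (Int.cast_ne_zero.2 hk)]

lemma emb_mem_newton {G : AddMonoidAlgebra R (Fin n → ℤ)} {u : Fin n → ℤ} (hu : G.coeff u ≠ 0) :
    emb n u ∈ newton G :=
  subset_convexHull ℝ _ ⟨u, hu, rfl⟩

lemma newton_subset (hK : Convex ℝ K) {G : AddMonoidAlgebra R (Fin n → ℤ)}
    (h : ∀ u, G.coeff u ≠ 0 → emb n u ∈ K) : newton G ⊆ K :=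
  convexHull_min (Set.image_subset_iff.2 h) hK

lemma newton_nonempty {G : AddMonoidAlgebra R (Fin n → ℤ)} (hG : G ≠ 0) : (newton G).Nonempty := by
  contrapose! hG
  ext u
  by_contra hu
  exact hG.subset (emb_mem_newton hu)

lemma newton_one_subset : newton (1 : AddMonoidAlgebra R (Fin n → ℤ)) ⊆ 0 := by
  refine newton_subset (convex_singleton 0) fun u hu ↦ ?_
  rw [AddMonoidAlgebra.one_def, AddMonoidAlgebra.coeff_single, Finsupp.single_apply_ne_zero] at hu
  rw [hu.1]
  ext i
  simp [emb]

lemma newton_mul_subset (G H : AddMonoidAlgebra R (Fin n → ℤ)) :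
    newton (G * H) ⊆ newton G + newton H := by
  classical
  refine newton_subset ((convex_convexHull ℝ _).add (convex_convexHull ℝ _)) fun u hu ↦ ?_
  obtain ⟨v, hv, w, hw, rfl⟩ :=
    Finset.mem_add.1 (AddMonoidAlgebra.support_coeff_mul_subset G H (Finsupp.mem_support_iff.2 hu))
  rw [emb_add]
  exact Set.add_mem_add (emb_mem_newton (Finsupp.mem_support_iff.1 hv))
    (emb_mem_newton (Finsupp.mem_support_iff.1 hw))

lemma newton_mul_subset_add_smul (hK : Convex ℝ K) {G H : AddMonoidAlgebra R (Fin n → ℤ)} {s t : ℝ}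
    (hs : 0 ≤ s) (ht : 0 ≤ t) (hG : newton G ⊆ s • K) (hH : newton H ⊆ t • K) :
    newton (G * H) ⊆ (s + t) • K :=
  hK.add_smul hs ht ▸ (newton_mul_subset G H).trans (Set.add_subset_add hG hH)

lemma newton_pow_subset (hK : Convex ℝ K) (hne : K.Nonempty) {G : AddMonoidAlgebra R (Fin n → ℤ)}
    (hG : newton G ⊆ K) (m : ℕ) : newton (G ^ m) ⊆ (m : ℝ) • K := by
  induction m with
  | zero => simpa [Set.zero_smul_set hne] using newton_one_subset
  | succ m ih =>
    rw [pow_succ, Nat.cast_add_one]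
    exact newton_mul_subset_add_smul hK m.cast_nonneg zero_le_one ih (by rwa [one_smul])

lemma newton_twist_subset (φ : R →+* R) (k : ℤ) (G : AddMonoidAlgebra R (Fin n → ℤ)) :
    newton (twist φ k G) ⊆ (k : ℝ) • newton G := by
  refine newton_subset ((convex_convexHull ℝ _).smul _) fun u hu ↦ ?_
  rw [twist_eq_sum, AddMonoidAlgebra.coeff_sum, Finsupp.finsetSum_apply] at hu
  obtain ⟨z, hz, hzu⟩ := Finset.exists_ne_zero_of_sum_ne_zero hu
  rw [AddMonoidAlgebra.coeff_single, Finsupp.single_apply_ne_zero] at hzu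
  rw [hzu.1, emb_zsmul]
  exact Set.smul_mem_smul_set (emb_mem_newton (Finsupp.mem_support_iff.1 hz))

lemma newton_twistedPow_twist_subset (hK : Convex ℝ K) (hne : K.Nonempty) {k : ℤ} (hk : 1 ≤ k)
    {s : ℝ} (hs : 0 ≤ s) {H : AddMonoidAlgebra R (Fin n → ℤ)}
    (hH : newton H ⊆ ((k - 1) * s : ℝ) • K) (φ : R →+* R) (m : ℕ) :
    newton (twistedPow (twist φ k) H m) ⊆ ((k ^ m - 1) * s : ℝ) • K := by
  have hk' : (1 : ℝ) ≤ k := by exact_mod_cast hk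
  induction m with
  | zero => simpa [twistedPow, Set.zero_smul_set hne] using newton_one_subset
  | succ m ih =>
    have htwist : newton (twist φ k (twistedPow (twist φ k) H m)) ⊆
        (k * ((k ^ m - 1) * s) : ℝ) • K :=
      mul_smul (k : ℝ) _ K ▸ (newton_twist_subset φ k _).trans (Set.smul_set_mono ih)
    have hpow : (0 : ℝ) ≤ k ^ m - 1 := sub_nonneg.2 (one_le_pow₀ hk')
    have hmul := newton_mul_subset_add_smul hK (by positivity)
      (mul_nonneg (sub_nonneg.2 hk') hs) htwist hH
    rwa [show k * ((k ^ m - 1) * s) + (k - 1) * s = ((k : ℝ) ^ (m + 1) - 1) * s by ring] at hmul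

lemma emb_mem_smul_of_coeff_smul_sub_ne_zero (hK : Convex ℝ K) {k : ℤ} (hk : 1 ≤ k) {s : ℝ}
    (hs : 0 ≤ s) {H : AddMonoidAlgebra R (Fin n → ℤ)} (hH : newton H ⊆ ((k - 1) * s : ℝ) • K)
    {u w : Fin n → ℤ} (hu : emb n u ∈ s • K) (hw : H.coeff (k • w - u) ≠ 0) : emb n w ∈ s • K := by
  have hmem : emb n (k • w) ∈ ((k - 1) * s : ℝ) • K + s • K := by
    rw [← sub_add_cancel (k • w) u, emb_add]
    exact Set.add_mem_add (hH (emb_mem_newton hw)) hu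
  rw [← hK.add_smul (mul_nonneg (sub_nonneg.2 (by exact_mod_cast hk)) hs) hs] at hmem
  rw [← emb_zsmul_mem_smul_iff (by omega : k ≠ 0)]
  convert hmem using 2
  ring

end NewtonPolytope

section LaurentEval

variable {κ R S T : Type*} [Fintype κ] [CommSemiring R] [CommSemiring S] [CommSemiring T]

/-- The value at a point `c` of the torus `(Sˣ)^κ` of a Laurent polynomial whose coefficients are
read in `S` through `f`. -/
def laurentEval (f : R →+* S) (c : κ → Sˣ) : AddMonoidAlgebra R (κ → ℤ) →+* S :=
  AddMonoidAlgebra.liftNCRingHom f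
    { toFun u := (∏ i, c i ^ u.toAdd i : Sˣ)
      map_one' := by simp
      map_mul' u v := by simp [zpow_add, Finset.prod_mul_distrib] }
    fun _ _ ↦ Commute.all _ _

@[simp]
lemma laurentEval_single (f : R →+* S) (c : κ → Sˣ) (u : κ → ℤ) (x : R) :
    laurentEval f c (AddMonoidAlgebra.single u x) = f x * (∏ i, c i ^ u i : Sˣ) := by
  simp [laurentEval]

lemma laurentEval_eq_sum (f : R →+* S) (c : κ → Sˣ) (G : AddMonoidAlgebra R (κ → ℤ)) :
    laurentEval f c G = G.coeff.sum fun u x ↦ f x * (∏ i, c i ^ u i : Sˣ) := by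
  conv_lhs => rw [← AddMonoidAlgebra.sum_coeff_single G, Finsupp.sum, map_sum]
  simp only [laurentEval_single, Finsupp.sum]

lemma laurentEval_mapRingHom (f : S →+* T) (g : R →+* S) (c : κ → Tˣ)
    (G : AddMonoidAlgebra R (κ → ℤ)) :
    laurentEval f c (AddMonoidAlgebra.mapRingHom (κ → ℤ) g G) = laurentEval (f.comp g) c G := by
  refine DFunLike.congr_fun (f := (laurentEval f c).comp (AddMonoidAlgebra.mapRingHom (κ → ℤ) g))
    (AddMonoidAlgebra.ringHom_ext (fun x ↦ ?_) fun u ↦ ?_) G <;> simp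

lemma map_laurentEval (g : S →+* T) (f : R →+* S) (c : κ → Sˣ) (G : AddMonoidAlgebra R (κ → ℤ)) :
    g (laurentEval f c G) = laurentEval (g.comp f) (fun i ↦ Units.map g (c i)) G := by
  have hprod (u : κ → ℤ) :
      g (∏ i, c i ^ u i : Sˣ) = (∏ i, Units.map (g : S →* T) (c i) ^ u i : Tˣ) := by
    have h := map_prod (Units.map (g : S →* T)) (fun i ↦ c i ^ u i) Finset.univ
    simp only [map_zpow] at h
    rw [← h]
    rfl
  refine DFunLike.congr_fun (f := g.comp (laurentEval f c))
    (AddMonoidAlgebra.ringHom_ext (fun x ↦ ?_) fun u ↦ ?_) G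
  · simp
  · simp only [RingHom.comp_apply, laurentEval_single, map_one, one_mul, hprod]

lemma laurentEval_twist {φ : R →+* R} {ψ : S →+* S} {k : ℤ} {f : R →+* S} {c : κ → Sˣ}
    (hf : ∀ x, ψ (f x) = f (φ x)) (hc : ∀ i, Units.map ψ (c i) = c i ^ k)
    (G : AddMonoidAlgebra R (κ → ℤ)) :
    laurentEval f c (twist φ k G) = ψ (laurentEval f c G) := by
  rw [map_laurentEval]
  refine DFunLike.congr_fun (f := (laurentEval f c).comp (twist φ k))
    (AddMonoidAlgebra.ringHom_ext (fun x ↦ ?_) fun u ↦ ?_) G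
  · simp [hf]
  · simp [hc, zpow_mul]

end LaurentEval

section CharacterSums

lemma finsum_comp_of_injective {ι₁ ι₂ A : Type*} [AddCommMonoid A] {e : ι₁ → ι₂}
    (he : Function.Injective e) {g : ι₂ → A} (hg : Function.support g ⊆ Set.range e) :
    ∑ᶠ i, g (e i) = ∑ᶠ j, g j := by
  rw [← finsum_mem_range he, ← finsum_mem_univ g]
  exact finsum_mem_inter_support_eq _ _ _ <| by rw [Set.univ_inter, Set.inter_eq_right.2 hg]

variable {C S : Type*} [CommGroup C] [IsCyclic C] [Fintype C] [CommRing S] [IsDomain S]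
  {χ : C →* Sˣ}

lemma sum_zpow_of_injective (hχ : Function.Injective χ) (k : ℤ) :
    ∑ x, ((χ x ^ k : Sˣ) : S) = if (Fintype.card C : ℤ) ∣ k then (Fintype.card C : S) else 0 := by
  classical
  let χk : C →* S := (Units.coeHom S).comp ((zpowGroupHom k).comp χ)
  have htriv : χk = 1 ↔ (Fintype.card C : ℤ) ∣ k := by
    rw [← Nat.card_eq_fintype_card, ← IsCyclic.exponent_eq_card,
      Group.exponent_dvd_iff_forall_zpow_eq_one, DFunLike.ext_iff]
    refine forall_congr' fun x ↦ ?_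
    change ((χ x ^ k : Sˣ) : S) = 1 ↔ _
    rw [Units.val_eq_one, ← map_zpow, map_eq_one_iff χ hχ]
  calc ∑ x, ((χ x ^ k : Sˣ) : S) = ∑ x, χk x := rfl
    _ = _ := by rw [sum_hom_units χk]; simp only [htriv, Nat.cast_ite, Nat.cast_zero]

variable {κ : Type*} [Fintype κ]

lemma sum_prod_zpow_of_injective [DecidableEq κ] (hχ : Function.Injective χ) (u : κ → ℤ) :
    ∑ c : κ → C, ((∏ i, χ (c i) ^ u i : Sˣ) : S) =
      if ∀ i, (Fintype.card C : ℤ) ∣ u i then (Fintype.card C : S) ^ Fintype.card κ else 0 := by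
  simp only [Units.coe_prod]
  rw [← Fintype.prod_sum fun i x ↦ ((χ x ^ u i : Sˣ) : S)]
  simp only [sum_zpow_of_injective hχ]
  rw [Finset.prod_ite_zero]
  simp

lemma sum_laurentEval [DecidableEq κ] {R : Type*} [CommSemiring R] (hχ : Function.Injective χ)
    (f : R →+* S) (G : AddMonoidAlgebra R (κ → ℤ)) {B : Finset (κ → ℤ)}
    (hB : ∀ u, G.coeff ((Fintype.card C : ℤ) • u) ≠ 0 → u ∈ B) :
    ∑ c : κ → C, laurentEval f (fun i ↦ χ (c i)) G =
      (Fintype.card C : S) ^ Fintype.card κ *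
        f (∑ u ∈ B, G.coeff ((Fintype.card C : ℤ) • u)) := by
  set N := Fintype.card C
  let term (z : κ → ℤ) : S :=
    f (G.coeff z) * if ∀ i, (N : ℤ) ∣ z i then (N : S) ^ Fintype.card κ else 0
  have hinj : Function.Injective fun u : κ → ℤ ↦ (N : ℤ) • u :=
    smul_right_injective _ (Nat.cast_ne_zero.2 Fintype.card_ne_zero)
  have hterm (u : κ → ℤ) : term ((N : ℤ) • u) = N ^ Fintype.card κ * f (G.coeff ((N : ℤ) • u)) := by
    simp [term, mul_comm]
  have hrange : Function.support term ⊆ Set.range fun u : κ → ℤ ↦ (N : ℤ) • u := by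
    intro z hz
    choose u hu using (ite_ne_right_iff.1 (right_ne_zero_of_mul hz)).1
    exact ⟨u, funext fun i ↦ (hu i).symm⟩
  calc ∑ c : κ → C, laurentEval f (fun i ↦ χ (c i)) G
      = ∑ z ∈ G.coeff.support, term z := by
        simp only [laurentEval_eq_sum, Finsupp.sum]
        rw [Finset.sum_comm]
        simp only [← Finset.mul_sum, sum_prod_zpow_of_injective hχ, term, N]
    _ = ∑ᶠ z, term z := by
        refine (finsum_eq_sum_of_support_subset _ fun z hz ↦ ?_).symm
        rw [Finset.mem_coe, Finsupp.mem_support_iff]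
        intro h
        simp [term, h] at hz
    _ = ∑ᶠ u, term ((N : ℤ) • u) := (finsum_comp_of_injective hinj hrange).symm
    _ = ∑ u ∈ B, term ((N : ℤ) • u) := by
        refine finsum_eq_sum_of_support_subset _ fun u hu ↦ hB u ?_
        intro h
        rw [Function.mem_support, hterm, h, map_zero, mul_zero] at hu
        exact hu rfl
    _ = _ := by simp only [hterm, map_sum, Finset.mul_sum]

end CharacterSums

section DworkTraceFormula

variable {n : ℕ} {R S C : Type*} [CommSemiring R] [CommRing S] [IsDomain S] [CommGroup C]
  [IsCyclic C] [Fintype C] {χ : C →* Sˣ} {K : Set (Fin n → ℝ)}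

theorem dwork_trace_formula (hχ : Function.Injective χ)
    {φ : R →+* R} {ψ : S →+* S} {k : ℤ} (hk : 1 ≤ k) {f : R →+* S}
    (hf : ∀ x, ψ (f x) = f (φ x)) (hψ : ∀ x, Units.map ψ (χ x) = χ x ^ k)
    {m : ℕ} (hcard : (Fintype.card C : ℤ) = k ^ m - 1) (hK : Convex ℝ K) (hne : K.Nonempty)
    {s : ℝ} (hs : 0 ≤ s) {H : AddMonoidAlgebra R (Fin n → ℤ)}
    (hH : newton H ⊆ ((k - 1) * s : ℝ) • K) {B : Finset (Fin n → ℤ)}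
    (hB : ∀ u, u ∈ B ↔ emb n u ∈ s • K) :
    (Fintype.card C : S) ^ n * f (twistedPow φ.mapMatrix (transferMatrix k H B) m).trace =
      ∑ c : Fin n → C, twistedPow ψ (laurentEval f (fun i ↦ χ (c i)) H) m := by
  have hstable (u) (hu : u ∈ B) (w) (hw : H.coeff (k • w - u) ≠ 0) : w ∈ B :=
    (hB w).2 (emb_mem_smul_of_coeff_smul_sub_ne_zero hK hk hs hH ((hB u).1 hu) hw)
  have hsupp (u) (hu : (twistedPow (twist φ k) H m).coeff ((Fintype.card C : ℤ) • u) ≠ 0) :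
      u ∈ B := by
    have hmem := newton_twistedPow_twist_subset hK hne hk hs hH φ m (emb_mem_newton hu)
    rw [hB, ← emb_zsmul_mem_smul_iff (Nat.cast_ne_zero.2 (Fintype.card_ne_zero (α := C)))]
    rwa [show (k ^ m - 1 : ℝ) = ((Fintype.card C : ℤ) : ℝ) by rw [hcard]; push_cast; rfl] at hmem
  have hsum := sum_laurentEval hχ f (twistedPow (twist φ k) H m) hsupp
  rw [trace_twistedPow_transferMatrix hstable, ← hcard]
  rw [Fintype.card_fin] at hsum
  rw [← hsum]
  exact Finset.sum_congr rfl fun c _ ↦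
    map_twistedPow _ (laurentEval_twist hf fun i ↦ hψ (c i)) H m

end DworkTraceFormula

section WittNorm

local notation "𝕎" => WittVector p

variable {p}

section CommRing

variable {k L : Type*} [CommRing k] [CommRing L]

lemma frobenius_map (f : k →+* L) (x : 𝕎 k) :
    WittVector.frobenius (WittVector.map f x) = WittVector.map f (WittVector.frobenius x) := by
  ext i
  rw [map_coeff, coeff_frobenius, coeff_frobenius, MvPolynomial.map_aeval,
    MvPolynomial.aeval_eq_eval₂Hom]
  exact MvPolynomial.eval₂Hom_congr (RingHom.ext_int _ _) (funext fun j ↦ map_coeff f x j) rfl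

lemma teichmuller_leftInverse : Function.LeftInverse constantCoeff (teichmuller p : L → 𝕎 L) :=
  teichmuller_coeff_zero p

lemma units_map_teichmuller_injective :
    Function.Injective (Units.map (teichmuller p : L →* 𝕎 L)) :=
  Units.map_injective teichmuller_leftInverse.injective

lemma units_map_constantCoeff_teichmuller (x : Lˣ) :
    Units.map (constantCoeff : 𝕎 L →+* L) (Units.map (teichmuller p) x) = x :=
  Units.ext (teichmuller_leftInverse (x : L))

variable [CharP L p]

lemma frobenius_teichmuller (x : L) :
    WittVector.frobenius (teichmuller p x) = teichmuller p x ^ p := by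
  rw [frobenius_eq_map_frobenius, map_teichmuller, frobenius_def, map_pow]

lemma units_map_frobenius_teichmuller (x : Lˣ) :
    Units.map (WittVector.frobenius : 𝕎 L →+* 𝕎 L) (Units.map (teichmuller p) x) =
      Units.map (teichmuller p) x ^ (p : ℤ) := by
  ext1
  simp [frobenius_teichmuller]

lemma constantCoeff_twistedPow_frobenius (x : 𝕎 L) (m : ℕ) :
    constantCoeff (twistedPow WittVector.frobenius x m) =
      constantCoeff x ^ ∑ i ∈ Finset.range m, p ^ i := by
  rw [map_twistedPow constantCoeff (g := (· ^ p)) (fun y ↦ coeff_frobenius_charP p y 0),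
    twistedPow_powMap]

variable [PerfectRing L p]

lemma dvd_iff_constantCoeff_eq_zero {x : 𝕎 L} : (p : 𝕎 L) ∣ x ↔ constantCoeff x = 0 := by
  rw [← Ideal.mem_span_singleton]
  exact mem_span_p_iff_coeff_zero_eq_zero x

lemma pow_dvd_of_pow_dvd_map [CharP k p] [PerfectRing k p] {f : k →+* L}
    (hf : Function.Injective f) {l : ℕ} {x : 𝕎 k} (h : (p : 𝕎 L) ^ l ∣ WittVector.map f x) :
    (p : 𝕎 k) ^ l ∣ x := by
  rw [← Ideal.mem_span_singleton, mem_span_p_pow_iff_le_coeff_eq_zero] at h ⊢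
  simpa [map_coeff, map_eq_zero_iff f hf] using h

lemma pow_dvd_twistedPow_frobenius {x : 𝕎 L} (hx : constantCoeff x = 0) (m : ℕ) :
    (p : 𝕎 L) ^ m ∣ twistedPow WittVector.frobenius x m :=
  pow_dvd_twistedPow _ (map_natCast _ p) (dvd_iff_constantCoeff_eq_zero.2 hx) m

end CommRing

section FiniteField

variable {L : Type*} [Field L] [CharP L p] [Finite L] {m : ℕ}

lemma iterate_frobenius_eq_self (hL : Nat.card L = p ^ m) (x : 𝕎 L) :
    WittVector.frobenius^[m] x = x := by
  have := Fintype.ofFinite L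
  ext i
  rw [iterate_frobenius_coeff, ← hL, Nat.card_eq_fintype_card, FiniteField.pow_card]

lemma dvd_one_sub_twistedPow_frobenius_pow (hL : Nat.card L = p ^ m) {x : 𝕎 L}
    (hx : constantCoeff x ≠ 0) :
    (p : 𝕎 L) ∣ 1 - twistedPow WittVector.frobenius x m ^ (p - 1) := by
  have := Fintype.ofFinite L
  have hfermat : constantCoeff x ^ (p ^ m - 1) = 1 := by
    rw [← hL, Nat.card_eq_fintype_card, FiniteField.pow_card_sub_one_eq_one _ hx]
  rw [dvd_iff_constantCoeff_eq_zero, map_sub, map_one, map_pow, constantCoeff_twistedPow_frobenius,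
    ← pow_mul, geom_sum_mul_of_one_le (Fact.out : p.Prime).one_le, hfermat, sub_self]

lemma pow_dvd_indicator_sub_sum_α_mul_pow (hL : Nat.card L = p ^ m) {lam tau : ℕ} (hlam : 0 < lam)
    (hbound : lam ≤ m * ((p - 1) * tau)) (x : 𝕎 L) [Decidable (constantCoeff x = 0)] :
    (p : 𝕎 L) ^ lam ∣ (if constantCoeff x = 0 then 1 else 0) -
      ∑ s ∈ Finset.range (lam + tau),
        (α lam tau s : 𝕎 L) * (twistedPow WittVector.frobenius x m ^ (p - 1)) ^ s := by
  set y := twistedPow WittVector.frobenius x m ^ (p - 1) with hy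
  split_ifs with hx
  · have hpy : (p : 𝕎 L) ^ lam ∣ y ^ tau := by
      have hdvd := pow_dvd_pow_of_dvd (pow_dvd_twistedPow_frobenius hx m) ((p - 1) * tau)
      rw [← pow_mul, pow_mul _ (p - 1), ← hy] at hdvd
      exact (pow_dvd_pow _ hbound).trans hdvd
    rw [dvd_sub_comm]
    exact hpy.trans (pow_dvd_sum_α_mul_pow_sub_one tau hlam y)
  · rw [zero_sub, dvd_neg]
    exact (pow_dvd_pow_of_dvd (dvd_one_sub_twistedPow_frobenius_pow hL hx) lam).trans
      (one_sub_pow_dvd_sum_α_mul_pow tau hlam y)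

end FiniteField

end WittNorm

section TeichmullerLift

local notation "𝕎" => WittVector p

variable {p n} {k L : Type*} [CommRing k] [Field L]

lemma constantCoeff_laurentEval_teichmuller {κ : Type*} [Fintype κ] (f : k →+* L) (c : κ → Lˣ)
    (F : AddMonoidAlgebra (𝕎 k) (κ → ℤ)) :
    constantCoeff (laurentEval (WittVector.map f) (fun i ↦ Units.map (teichmuller p) (c i)) F) =
      laurentEval f c (AddMonoidAlgebra.mapRingHom (κ → ℤ) constantCoeff F) := by
  have hcomp : (constantCoeff.comp (WittVector.map f) : 𝕎 k →+* L) = f.comp constantCoeff :=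
    RingHom.ext fun x ↦ map_coeff f x 0
  rw [map_laurentEval, laurentEval_mapRingHom, hcomp]
  simp only [units_map_constantCoeff_teichmuller]

variable [CharP L p] [Finite L] {m : ℕ} {K : Set (Fin n → ℝ)}

lemma sum_twistedPow_frobenius_laurentEval_pow [Fintype Lˣ] (hL : Nat.card L = p ^ m) (f : k →+* L)
    (hK : Convex ℝ K) (hne : K.Nonempty) {F : AddMonoidAlgebra (𝕎 k) (Fin n → ℤ)}
    (hF : newton F ⊆ K) {s : ℕ} {B : Finset (Fin n → ℤ)}
    (hB : ∀ u, u ∈ B ↔ emb n u ∈ (s : ℝ) • K) :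
    ∑ c : Fin n → Lˣ, (twistedPow WittVector.frobenius (laurentEval (WittVector.map f)
        (fun i ↦ Units.map (teichmuller p) (c i)) F) m ^ (p - 1)) ^ s =
      ((p ^ m - 1 : ℕ) : 𝕎 L) ^ n * WittVector.map f
        (twistedPow WittVector.frobenius.mapMatrix
          (transferMatrix p (F ^ ((p - 1) * s)) B) m).trace := by
  have hp : 1 ≤ p := (Fact.out : p.Prime).one_le
  have hcard : Fintype.card Lˣ = p ^ m - 1 := by
    rw [← hL, ← Nat.card_units, Nat.card_eq_fintype_card]
  have hH : newton (F ^ ((p - 1) * s)) ⊆ (((p : ℤ) - 1 : ℝ) * s) • K := by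
    simpa [hp] using newton_pow_subset hK hne hF ((p - 1) * s)
  have hcard_int : (Fintype.card Lˣ : ℤ) = (p : ℤ) ^ m - 1 := by
    rw [hcard, Nat.cast_sub (Nat.one_le_pow _ _ hp), Nat.cast_pow, Nat.cast_one]
  rw [← hcard, dwork_trace_formula units_map_teichmuller_injective (by exact_mod_cast hp)
    (frobenius_map f) units_map_frobenius_teichmuller hcard_int hK hne s.cast_nonneg hH hB]
  exact Finset.sum_congr rfl fun c _ ↦ by rw [map_pow, twistedPow_pow, pow_mul]

open Classical in
theorem pow_dvd_sum_indicator_sub_trace [Fintype Lˣ] (hL : Nat.card L = p ^ m) (f : k →+* L)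
    (hK : Convex ℝ K) (hne : K.Nonempty) {F : AddMonoidAlgebra (𝕎 k) (Fin n → ℤ)}
    (hF : newton F ⊆ K) {lam tau : ℕ} (hlam : 0 < lam) (hbound : lam ≤ m * ((p - 1) * tau))
    {B : ℕ → Finset (Fin n → ℤ)} (hB : ∀ s u, u ∈ B s ↔ emb n u ∈ (s : ℝ) • K) :
    (p : 𝕎 L) ^ lam ∣
      (∑ c : Fin n → Lˣ,
        if laurentEval f c (AddMonoidAlgebra.mapRingHom (Fin n → ℤ) constantCoeff F) = 0
        then 1 else 0) -
      ((p ^ m - 1 : ℕ) : 𝕎 L) ^ n *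
        ∑ s ∈ Finset.range (lam + tau), (α lam tau s : 𝕎 L) * WittVector.map f
          (twistedPow WittVector.frobenius.mapMatrix
            (transferMatrix p (F ^ ((p - 1) * s)) (B s)) m).trace := by
  have htrace (s : ℕ) := sum_twistedPow_frobenius_laurentEval_pow hL f hK hne hF (hB s)
  simp only [Finset.mul_sum, mul_left_comm (_ ^ n), ← htrace]
  rw [Finset.sum_comm, ← Finset.sum_sub_distrib]
  refine Finset.dvd_sum fun c _ ↦ ?_
  rw [← constantCoeff_laurentEval_teichmuller]
  exact pow_dvd_indicator_sub_sum_α_mul_pow hL hlam hbound _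

end TeichmullerLift

section WittFiniteField

variable {p a n}

lemma Φmat_pow_eq_twistedPow (ha : a ≠ 0) {B : Finset (Fin n → ℤ)} (M : Matrix B B (Zq p a))
    (r : ℕ) : Φmat p a n B M ^ r =
      twistedPow (WittVector.frobenius : Zq p a →+* Zq p a).mapMatrix M (a * r) := by
  set Fr := (WittVector.frobenius : Zq p a →+* Zq p a).mapMatrix (m := B)
  have hiter (i : ℕ) (N : Matrix B B (Zq p a)) : Fr^[i] N = N.map (⇑(φW p a))^[i] := by
    induction i with
    | zero => rfl
    | succ i ih => rw [Function.iterate_succ_apply', Function.iterate_succ', ih]; rfl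
  have hperiod (N : Matrix B B (Zq p a)) : Fr^[a] N = N := by
    rw [hiter]
    exact Matrix.ext fun _ _ ↦ iterate_frobenius_eq_self (GaloisField.card p a ha) _
  rw [twistedPow_mul Fr hperiod, twistedPow_eq_list_prod, Φmat]
  simp only [hiter]

lemma evalTorus_units {r : ℕ} (ι : Fq p a →+* GaloisField p (a * r))
    (Fbar : AddMonoidAlgebra (Fq p a) (Fin n → ℤ)) (c : Fin n → (GaloisField p (a * r))ˣ) :
    evalTorus p a n r ι Fbar (fun i ↦ c i) = laurentEval ι c Fbar := by
  simp [evalTorus, laurentEval_eq_sum]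

open Classical in
lemma Npoints_eq_sum {r : ℕ} [Fintype (GaloisField p (a * r))ˣ]
    (ι : Fq p a →+* GaloisField p (a * r)) (Fbar : AddMonoidAlgebra (Fq p a) (Fin n → ℤ)) :
    Npoints p a n r ι Fbar =
      ∑ c : Fin n → (GaloisField p (a * r))ˣ, if laurentEval ι c Fbar = 0 then 1 else 0 := by
  simp only [← evalTorus_units]
  rw [← Finset.card_filter, Npoints, ← Fintype.card_subtype, ← Nat.card_eq_fintype_card]
  exact Nat.card_congr
    { toFun c := ⟨fun i ↦ Units.mk0 (c.1 i) (c.2.1 i), by simpa using c.2.2⟩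
      invFun c := ⟨fun i ↦ c.1 i, fun i ↦ (c.1 i).ne_zero, c.2⟩
      left_inv c := by ext; simp
      right_inv c := by ext; simp }

end WittFiniteField

theorem trace_formula_general {K : Set (Fin n → ℝ)} (hK : Convex ℝ K) (hne : K.Nonempty)
    (Fbar : AddMonoidAlgebra (Fq p a) (Fin n → ℤ)) (F : LP p a n)
    (hlift : ∀ u : Fin n → ℤ, (F.coeff u).coeff 0 = Fbar.coeff u) (hΔ : newton F ⊆ K)
    (r lam tau : ℕ) (hlam : 1 ≤ lam) (hbound : lam ≤ tau * (p - 1) * a * r)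
    (ι : Fq p a →+* GaloisField p (a * r)) (B : ℕ → Finset (Fin n → ℤ))
    (hB : ∀ s : ℕ, ∀ u : Fin n → ℤ, u ∈ B s ↔ emb n u ∈ (s : ℝ) • K) :
    ((Npoints p a n r ι Fbar : Zq p a) -
        (((p ^ a) ^ r - 1 : ℕ) : Zq p a) ^ n *
          ∑ s ∈ Finset.range (lam + tau),
            (α lam tau s : Zq p a) *
              Matrix.trace ((Φmat p a n (B s) (Ms p a n F s (B s))) ^ r)) ∈
      Ideal.span {(p : Zq p a) ^ lam} := by
  have hbound' : lam ≤ a * r * ((p - 1) * tau) := hbound.trans (by ring_nf; rfl)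
  have har : a * r ≠ 0 := by
    intro h
    rw [h, zero_mul] at hbound'
    omega
  have := Fintype.ofFinite (GaloisField p (a * r))ˣ
  have hred : AddMonoidAlgebra.mapRingHom (Fin n → ℤ) constantCoeff F = Fbar := by
    ext u
    simpa using hlift u
  have hmod := pow_dvd_sum_indicator_sub_trace (GaloisField.card p _ har) ι hK hne hΔ hlam
    hbound' hB
  rw [Ideal.mem_span_singleton]
  refine pow_dvd_of_pow_dvd_map ι.injective ?_
  simp only [Φmat_pow_eq_twistedPow (left_ne_zero_of_mul har), Npoints_eq_sum, ← pow_mul, map_sub,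
    map_mul, map_pow, map_sum, map_natCast, map_intCast]
  rw [hred] at hmod
  exact_mod_cast hmod

/-- Harvey's trace formula (Theorem 3.1 of the paper): with the above notation, and with
`F ∈ ℤ_q[x^±]` any lift of `F̄` (coefficientwise reduction modulo `p`, i.e. the zeroth
Witt component, recovers `F̄`) with `Δ(F) ⊆ K`, and positive integers `r, λ, τ` with
`τ(p−1)ar ≥ λ`, one has
`N ≡ (q^r−1)^n Σ_{s=0}^{λ+τ−1} α_s · tr(Φ_s^r) (mod p^λ)` in `ℤ_q`. -/
theorem trace_formula (ha : 1 ≤ a) (hn : 1 ≤ n) (S : Finset (Fin n → ℤ))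
    (Fbar : AddMonoidAlgebra (Fq p a) (Fin n → ℤ)) (hFbar : Fbar ≠ 0)
    (hΔbar : newton Fbar ⊆ convexHull ℝ (emb n '' (S : Set (Fin n → ℤ))))
    (F : LP p a n)
    (hlift : ∀ u : Fin n → ℤ, (F.coeff u).coeff 0 = Fbar.coeff u)
    (hΔ : newton F ⊆ convexHull ℝ (emb n '' (S : Set (Fin n → ℤ))))
    (r lam tau : ℕ) (hr : 1 ≤ r) (hlam : 1 ≤ lam) (htau : 1 ≤ tau)
    (hbound : lam ≤ tau * (p - 1) * a * r)
    (ι : Fq p a →+* GaloisField p (a * r))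
    (B : ℕ → Finset (Fin n → ℤ))
    (hB : ∀ s : ℕ, ∀ u : Fin n → ℤ,
      u ∈ B s ↔ emb n u ∈ (s : ℝ) • convexHull ℝ (emb n '' (S : Set (Fin n → ℤ)))) :
    ((Npoints p a n r ι Fbar : Zq p a) -
        (((p ^ a) ^ r - 1 : ℕ) : Zq p a) ^ n *
          ∑ s ∈ Finset.range (lam + tau),
            (α lam tau s : Zq p a) *
              Matrix.trace ((Φmat p a n (B s) (Ms p a n F s (B s))) ^ r)) ∈
      Ideal.span {(p : Zq p a) ^ lam} := by
  exact trace_formula_general p a n (convex_convexHull ℝ _) ((newton_nonempty hFbar).mono hΔbar)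
    Fbar F hlift hΔ r lam tau hlam hbound ι B hB
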